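/- Let n ≥ 4, let 0 < Z ≤ 2^n and set a = ⌊log_2 Z⌋. Let s and c be integers with 2^n - 2^s < c < 2^n - 2^{s-1} and s > a, and let t be an integer with a + 1 ≤ t ≤ s - 1. Then the number of 2^n-periodic binary sequences S with odd Hamming weight in one period, L_1(S) = c, and L_{1;Z}(S) = 2^n - 2^t is exactly Z · 2^{c + s - t - 2}. -/

import Mathlib

/-- Generating polynomial `S^N(x) = s_0 + s_1 x + ... + s_{N-1} x^{N-1}` of one period
of an `N`-periodic binary sequence. -/
noncomputable def genPoly {N : ℕ} (S : Fin N → ZMod 2) : Polynomial (ZMod 2) :=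
  ∑ i : Fin N, Polynomial.C (S i) * Polynomial.X ^ (i : ℕ)

/-- Linear complexity `L(S) = N - deg (gcd (1 - x^N, S^N(x)))`. -/
noncomputable def linComp {N : ℕ} (S : Fin N → ZMod 2) : ℕ :=
  N - (EuclideanDomain.gcd (1 - Polynomial.X ^ N) (genPoly S)).natDegree

/-- Hamming weight of one period of an `N`-periodic binary sequence. -/
def wt {N : ℕ} (T : Fin N → ZMod 2) : ℕ :=
  (Finset.univ.filter (fun i => T i ≠ 0)).card

/-- `k`-error linear complexity `L_{N,k}(S)`. -/
noncomputable def errLC {N : ℕ} (S : Fin N → ZMod 2) (k : ℕ) : ℕ :=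
  sInf {c | ∃ T : Fin N → ZMod 2, wt T ≤ k ∧ linComp (S + T) = c}

/-- `k`-error linear complexity with a zone of length `Z`: `L_{N,k;Z}(S)`. -/
noncomputable def errLCZone {N : ℕ} (S : Fin N → ZMod 2) (k Z : ℕ) : ℕ :=
  sInf {c | ∃ T : Fin N → ZMod 2, wt T ≤ k ∧ (∀ i : Fin N, Z ≤ (i : ℕ) → T i = 0) ∧
    linComp (S + T) = c}

/-- `E_1(j)`: the sequence whose only nonzero term in one period is a `1` at position `j`. -/
def E1 {N : ℕ} (j : Fin N) : Fin N → ZMod 2 :=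
  fun i => if i = j then 1 else 0

/-!
Over `F_2` we have `1 - X ^ 2 ^ n = (X - 1) ^ 2 ^ n`, so `L(S) ≤ c` says that
`(X - 1) ^ (2 ^ n - c)` divides the generating polynomial of `S`; in particular
`L(S + T) ≤ max (L(S)) (L(T))`. Since
`(X - 1) ^ m` divides `X ^ i - X ^ j` exactly when `i ≡ j` modulo `2 ^ ⌈log₂ m⌉`, once one error
position `r` brings the complexity of `S` down to at most `c`, the others that do so are those
congruent to `r` modulo `2 ^ ⌈log₂ (2 ^ n - c)⌉`.

For `2 ^ n - 2 ^ s < c < 2 ^ n - 2 ^ (s - 1)` this modulus is `2 ^ s` for both `c` and `c - 1`, so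
the odd-weight `S` with `L_1(S) = c` correspond to pairs of a residue `r < 2 ^ s` and a sequence
`S + E_1(r)` of complexity exactly `c`, of which there are `2 ^ (c - 1)`. The moduli for
`2 ^ n - 2 ^ t` and `2 ^ n - 2 ^ t - 1` are `2 ^ t` and `2 ^ (t + 1)`, so the zone condition reads
`r % 2 ^ t < Z ≤ r % 2 ^ (t + 1)`. It selects `Z` residues in each block of length `2 ^ (t + 1)`.
-/

open Polynomial

section Counting

lemma count_mul_of_periodic {p : ℕ → Prop} [DecidablePred p] {Q : ℕ}
    (hp : Function.Periodic p Q) (M : ℕ) : Nat.count p (M * Q) = M * Nat.count p Q := by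
  induction M with
  | zero => simp
  | succ M ih =>
    have hshift (i : ℕ) : p (M * Q + i) = p i := by
      rw [add_comm]
      exact hp.nat_mul M i
    simp only [add_mul, one_mul, Nat.count_add, ih, hshift]

lemma count_lt_of_le {Z q : ℕ} (hZ : Z ≤ q) : Nat.count (· < Z) q = Z := by
  have hfilter : {i ∈ Finset.range q | i < Z} = Finset.range Z := by
    ext i
    simp only [Finset.mem_filter, Finset.mem_range]
    omega
  rw [Nat.count_eq_card_filter_range, hfilter, Finset.card_range]

lemma count_mod_lt_and_le_mod_two_mul {q Z : ℕ} (hZ : Z ≤ q) :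
    Nat.count (fun i => i % q < Z ∧ Z ≤ i % (2 * q)) (2 * q) = Z := by
  rw [two_mul]
  have hlow : Nat.count (fun i => i % q < Z ∧ Z ≤ i % (q + q)) q = 0 := by
    refine Nat.count_of_forall_not fun i hi => ?_
    rw [Nat.mod_eq_of_lt hi, Nat.mod_eq_of_lt (by omega)]
    omega
  have hhigh : Nat.count (fun i => (q + i) % q < Z ∧ Z ≤ (q + i) % (q + q)) q =
      Nat.count (· < Z) q := by
    simp only [Nat.count_eq_card_filter_range]
    refine congrArg Finset.card (Finset.filter_congr fun i hi => ?_)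
    rw [Finset.mem_range] at hi
    rw [Nat.add_mod_left, Nat.mod_eq_of_lt hi, Nat.mod_eq_of_lt (by omega)]
    omega
  rw [Nat.count_add, hlow, hhigh, count_lt_of_le hZ, zero_add]

lemma ncard_fin_lt_and {N M : ℕ} (hMN : M ≤ N) (p : ℕ → Prop) [DecidablePred p] :
    {r : Fin N | (r : ℕ) < M ∧ p r}.ncard = Nat.count p M := by
  have himage : Fin.val '' {r : Fin N | (r : ℕ) < M ∧ p r} = ↑{i ∈ Finset.range M | p i} := by
    ext i
    simp only [Set.mem_image, Set.mem_ofPred_eq, Finset.coe_filter, Finset.mem_range]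
    constructor
    · rintro ⟨r, hr, rfl⟩
      exact hr
    · intro hi
      exact ⟨⟨i, hi.1.trans_le hMN⟩, hi, rfl⟩
  rw [← Set.ncard_image_of_injective _ Fin.val_injective, himage, Set.ncard_coe_finset,
    Nat.count_eq_card_filter_range]

lemma ncard_fin_lt_two_pow_and_mod {n s t Z : ℕ} (hsn : s ≤ n) (hts : t < s) (hZ : Z ≤ 2 ^ t) :
    {r : Fin (2 ^ n) | (r : ℕ) < 2 ^ s ∧ (r : ℕ) % 2 ^ t < Z ∧ Z ≤ (r : ℕ) % 2 ^ (t + 1)}.ncard =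
      2 ^ (s - t - 1) * Z := by
  have hperiodic : Function.Periodic (fun i => i % 2 ^ t < Z ∧ Z ≤ i % 2 ^ (t + 1))
      (2 ^ (t + 1)) := fun i => by
    have hmod : (i + 2 ^ (t + 1)) % 2 ^ t = i % 2 ^ t := by
      rw [pow_succ, Nat.add_mul_mod_self_left]
    simp only [hmod, Nat.add_mod_right]
  have hsplit : 2 ^ s = 2 ^ (s - t - 1) * 2 ^ (t + 1) := by
    rw [← pow_add]
    congr 1
    omega
  rw [ncard_fin_lt_and (Nat.pow_le_pow_right two_pos hsn)
    (fun i => i % 2 ^ t < Z ∧ Z ≤ i % 2 ^ (t + 1)), hsplit, count_mul_of_periodic hperiodic,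
    pow_succ', count_mod_lt_and_le_mod_two_mul hZ]

lemma ncard_setOf_exists_add_mem {ι G : Type*} [AddGroup G] {e : ι → G} {R : Set ι} {U : Set G}
    (hunique : ∀ g, ∀ i ∈ R, ∀ j ∈ R, g + e i ∈ U → g + e j ∈ U → i = j) :
    {g | ∃ i ∈ R, g + e i ∈ U}.ncard = R.ncard * U.ncard := by
  have himage : {g | ∃ i ∈ R, g + e i ∈ U} = (fun x : ι × G => x.2 - e x.1) '' R ×ˢ U := by
    ext g
    constructor
    · rintro ⟨i, hi, hg⟩
      exact ⟨(i, g + e i), ⟨hi, hg⟩, add_sub_cancel_right _ _⟩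
    · rintro ⟨⟨i, u⟩, ⟨hi, hu⟩, rfl⟩
      exact ⟨i, hi, by simpa using hu⟩
  have hinj : Set.InjOn (fun x : ι × G => x.2 - e x.1) (R ×ˢ U) := by
    rintro ⟨i, u⟩ ⟨hi, hu⟩ ⟨j, v⟩ ⟨hj, hv⟩ (huv : u - e i = v - e j)
    obtain rfl : i = j := hunique (u - e i) i hi j hj (by simpa using hu) (by simpa [huv] using hv)
    rw [sub_left_inj.mp huv]
  rw [himage, hinj.ncard_image, Set.ncard_prod]

lemma exists_fin_lt_and_modEq_iff {N q Z r : ℕ} (hZN : Z ≤ N) (hZq : Z ≤ q) :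
    (∃ j : Fin N, (j : ℕ) < Z ∧ r ≡ j [MOD q]) ↔ r % q < Z := by
  constructor
  · rintro ⟨j, hj, hrj⟩
    rwa [hrj, Nat.mod_eq_of_lt (hj.trans_le hZq)]
  · intro hr
    exact ⟨⟨r % q, hr.trans_le hZN⟩, hr, (Nat.mod_modEq r q).symm⟩

lemma clog_two_pow_sub {n k c : ℕ} (hlow : 2 ^ n - 2 ^ (k + 1) ≤ c) (hhigh : c < 2 ^ n - 2 ^ k) :
    Nat.clog 2 (2 ^ n - c) = k + 1 := by
  apply le_antisymm
  · rw [Nat.clog_le_iff_le_pow one_lt_two]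
    omega
  · rw [Nat.succ_le_iff, Nat.lt_clog_iff_pow_lt one_lt_two]
    omega

end Counting

section Polynomials

variable {R : Type*} [CommRing R]

lemma ncard_setOf_degree_lt (N : ℕ) : {p : R[X] | p.degree < N}.ncard = Nat.card R ^ N := by
  have hset : {p : R[X] | p.degree < N} = degreeLT R N := by
    ext p
    exact mem_degreeLT.symm
  rw [hset, ← Nat.card_coe_set_eq, SetLike.coe_sort_coe,
    Nat.card_congr (degreeLTEquiv R N).toEquiv, Nat.card_fun, Nat.card_fin]

lemma ncard_setOf_degree_lt_and_dvd {P : R[X]} (hP : P.Monic) {N : ℕ} (hPN : P.natDegree ≤ N) :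
    {p : R[X] | p.degree < N ∧ P ∣ p}.ncard = Nat.card R ^ (N - P.natDegree) := by
  nontriviality R
  have hdegree (w : R[X]) : (P * w).degree < N ↔ w.degree < (N - P.natDegree : ℕ) := by
    rcases eq_or_ne w 0 with rfl | hw
    · simp
    · rw [← natDegree_lt_iff_degree_lt (hP.mul_right_ne_zero hw), hP.natDegree_mul' hw,
        ← natDegree_lt_iff_degree_lt hw]
      omega
  have himage : {p : R[X] | p.degree < N ∧ P ∣ p} =
      (P * ·) '' {w | w.degree < (N - P.natDegree : ℕ)} := by
    ext p
    constructor
    · rintro ⟨hp, w, rfl⟩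
      exact ⟨w, (hdegree w).mp hp, rfl⟩
    · rintro ⟨w, hw, rfl⟩
      exact ⟨(hdegree w).mpr hw, dvd_mul_right P w⟩
  rw [himage, Set.ncard_image_of_injective _ hP.isRegular.left, ncard_setOf_degree_lt]

lemma monic_X_sub_one : (X - 1 : R[X]).Monic := by
  simpa using monic_X_sub_C (1 : R)

lemma natDegree_X_sub_one_pow [Nontrivial R] (m : ℕ) : ((X - 1 : R[X]) ^ m).natDegree = m := by
  rw [monic_X_sub_one.natDegree_pow, ← C_1, natDegree_X_sub_C, mul_one]

lemma X_sub_one_dvd_iff {p : R[X]} : X - 1 ∣ p ↔ p.eval 1 = 0 := by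
  rw [← C_1, dvd_iff_isRoot, IsRoot.def]

variable [IsDomain R]

lemma prime_X_sub_one : Prime (X - 1 : R[X]) := by
  simpa using prime_X_sub_C (1 : R)

variable {p : ℕ} [Fact p.Prime] [CharP R p]

lemma X_sub_one_pow_dvd_X_pow_sub_one_iff (m e : ℕ) :
    (X - 1 : R[X]) ^ m ∣ X ^ e - 1 ↔ p ^ Nat.clog p m ∣ e := by
  have hp : p.Prime := Fact.out
  rcases eq_or_ne e 0 with rfl | he
  · simp
  obtain ⟨v, o, ho, rfl⟩ := Nat.exists_eq_pow_mul_and_not_dvd he p hp.ne_one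
  have hfactor : (X ^ (p ^ v * o) - 1 : R[X]) =
      (X - 1) ^ p ^ v * (∑ i ∈ Finset.range o, X ^ i) ^ p ^ v := by
    rw [← mul_pow, mul_geom_sum, sub_pow_char_pow, one_pow, ← pow_mul, mul_comm]
  have hcofactor : ¬ (X - 1 : R[X]) ∣ (∑ i ∈ Finset.range o, X ^ i) ^ p ^ v := fun hdvd => by
    have hroot := X_sub_one_dvd_iff.mp (prime_X_sub_one.dvd_of_dvd_pow hdvd)
    simp only [eval_finsetSum, eval_pow, eval_X, one_pow, Finset.sum_const, Finset.card_range,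
      nsmul_eq_mul, mul_one, CharP.cast_eq_zero_iff R p] at hroot
    exact ho hroot
  calc (X - 1 : R[X]) ^ m ∣ X ^ (p ^ v * o) - 1
      ↔ (X - 1 : R[X]) ^ m ∣ (X - 1) ^ p ^ v := by
        rw [hfactor]
        exact ⟨prime_X_sub_one.pow_dvd_of_dvd_mul_right m hcofactor, fun h => h.mul_right _⟩
    _ ↔ Nat.clog p m ≤ v := by
        rw [pow_dvd_pow_iff prime_X_sub_one.ne_zero prime_X_sub_one.not_isUnit,
          Nat.clog_le_iff_le_pow hp.one_lt]
    _ ↔ p ^ Nat.clog p m ∣ p ^ v * o := by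
        rw [padicValNat_dvd_iff_le he, padicValNat.mul (pow_ne_zero _ hp.ne_zero) (by grind),
          padicValNat.prime_pow, padicValNat.eq_zero_of_not_dvd ho, add_zero]

lemma X_sub_one_pow_dvd_X_pow_sub_X_pow_iff (m a b : ℕ) :
    (X - 1 : R[X]) ^ m ∣ X ^ a - X ^ b ↔ a ≡ b [MOD p ^ Nat.clog p m] := by
  wlog hba : b ≤ a generalizing a b
  · rw [dvd_sub_comm, Nat.ModEq.comm]
    exact this b a (by omega)
  have hfactor : (X ^ a - X ^ b : R[X]) = X ^ b * (X ^ (a - b) - 1) := by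
    rw [mul_sub, ← pow_add, Nat.add_sub_cancel' hba, mul_one]
  have hcoprime : IsCoprime ((X - 1 : R[X]) ^ m) (X ^ b) :=
    IsCoprime.pow ⟨-1, 1, by ring⟩
  calc (X - 1 : R[X]) ^ m ∣ X ^ a - X ^ b
      ↔ (X - 1 : R[X]) ^ m ∣ X ^ (a - b) - 1 := by
        rw [hfactor]
        exact ⟨hcoprime.dvd_of_dvd_mul_left, fun h => h.mul_left _⟩
    _ ↔ a ≡ b [MOD p ^ Nat.clog p m] := by
        rw [X_sub_one_pow_dvd_X_pow_sub_one_iff (p := p), Nat.ModEq.comm,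
          Nat.modEq_iff_dvd' hba]

end Polynomials

section GeneratingPolynomial

variable {N : ℕ}

lemma genPoly_eq_degreeLTEquiv_symm (S : Fin N → ZMod 2) :
    genPoly S = ((degreeLTEquiv (ZMod 2) N).symm S : (ZMod 2)[X]) := by
  simp only [genPoly, C_mul_X_pow_eq_monomial]
  rfl

lemma genPoly_injective : Function.Injective (genPoly (N := N)) := by
  rw [funext genPoly_eq_degreeLTEquiv_symm]
  exact Subtype.val_injective.comp (degreeLTEquiv (ZMod 2) N).symm.injective

lemma range_genPoly : Set.range (genPoly (N := N)) = {p : (ZMod 2)[X] | p.degree < N} := by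
  ext p
  constructor
  · rintro ⟨S, rfl⟩
    rw [genPoly_eq_degreeLTEquiv_symm]
    exact mem_degreeLT.mp (Subtype.prop _)
  · intro hp
    refine ⟨degreeLTEquiv (ZMod 2) N ⟨p, mem_degreeLT.mpr hp⟩, ?_⟩
    rw [genPoly_eq_degreeLTEquiv_symm, LinearEquiv.symm_apply_apply]

lemma genPoly_add (S T : Fin N → ZMod 2) : genPoly (S + T) = genPoly S + genPoly T := by
  simp only [genPoly_eq_degreeLTEquiv_symm, map_add, Submodule.coe_add]

lemma genPoly_E1 (j : Fin N) : genPoly (E1 j) = X ^ (j : ℕ) := by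
  simp [genPoly, E1, apply_ite (C : ZMod 2 → (ZMod 2)[X])]

lemma ncard_setOf_dvd_genPoly {P : (ZMod 2)[X]} (hP : P.Monic) (hPN : P.natDegree ≤ N) :
    {S : Fin N → ZMod 2 | P ∣ genPoly S}.ncard = 2 ^ (N - P.natDegree) := by
  have himage : genPoly '' {S : Fin N → ZMod 2 | P ∣ genPoly S} =
      {p : (ZMod 2)[X] | p.degree < N ∧ P ∣ p} := by
    calc genPoly '' (genPoly ⁻¹' {p | P ∣ p}) = {p | P ∣ p} ∩ Set.range genPoly :=
          Set.image_preimage_eq_inter_range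
      _ = {p : (ZMod 2)[X] | p.degree < N ∧ P ∣ p} := by
          rw [range_genPoly, Set.inter_comm]
          rfl
  rw [← Set.ncard_image_of_injective _ genPoly_injective, himage,
    ncard_setOf_degree_lt_and_dvd hP hPN, Nat.card_zmod]

lemma eval_one_genPoly (S : Fin N → ZMod 2) : (genPoly S).eval 1 = (wt S : ZMod 2) := by
  have hterm (x : ZMod 2) : x = if x ≠ 0 then 1 else 0 := by
    revert x
    decide
  simp only [genPoly, wt, eval_finsetSum, eval_mul, eval_C, eval_pow, eval_X, one_pow, mul_one,
    Finset.card_filter, Nat.cast_sum, Nat.cast_ite, Nat.cast_one, Nat.cast_zero]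
  exact Finset.sum_congr rfl fun i _ => hterm (S i)

lemma wt_E1 (j : Fin N) : wt (E1 j) = 1 := by
  simp [wt, E1, Finset.filter_eq']

lemma wt_le_one_iff (T : Fin N → ZMod 2) : wt T ≤ 1 ↔ T = 0 ∨ ∃ j, T = E1 j := by
  constructor
  · intro hT
    refine or_iff_not_imp_left.mpr fun hT0 => ?_
    obtain ⟨j, hj⟩ := Function.ne_iff.mp hT0
    have hunique (i : Fin N) (hi : T i ≠ 0) : i = j :=
      Finset.card_le_one.mp hT i (by simpa using hi) j (by simpa using hj)
    refine ⟨j, funext fun i => ?_⟩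
    by_cases hij : i = j
    · have hone : T j = 1 := Fin.eq_one_of_ne_zero (T j) hj
      simp [E1, hij, hone]
    · simpa [E1, hij] using mt (hunique i) hij
  · rintro (rfl | ⟨j, rfl⟩)
    · simp [wt]
    · exact (wt_E1 j).le

lemma E1_eq_zero_of_le_iff (j : Fin N) (Z : ℕ) :
    (∀ i : Fin N, Z ≤ (i : ℕ) → (E1 j : Fin N → ZMod 2) i = 0) ↔ (j : ℕ) < Z := by
  simp only [E1, ite_eq_right_iff, one_ne_zero, imp_false]
  grind

end GeneratingPolynomial

section LinearComplexity

lemma linComp_le {N : ℕ} (S : Fin N → ZMod 2) : linComp S ≤ N :=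
  Nat.sub_le _ _

variable {n : ℕ}

lemma linComp_le_iff (S : Fin (2 ^ n) → ZMod 2) (c : ℕ) :
    linComp S ≤ c ↔ (X - 1) ^ (2 ^ n - c) ∣ genPoly S := by
  have hmodulus : (1 - X ^ 2 ^ n : (ZMod 2)[X]) = (X - 1) ^ 2 ^ n := by
    rw [sub_pow_char_pow, one_pow, CharTwo.sub_eq_add, CharTwo.sub_eq_add, add_comm]
  obtain ⟨i, -, hgcd⟩ := (dvd_prime_pow prime_X_sub_one _).mp
    (EuclideanDomain.gcd_dvd_left ((X - 1) ^ 2 ^ n) (genPoly S))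
  have hnatDegree : (EuclideanDomain.gcd ((X - 1) ^ 2 ^ n) (genPoly S)).natDegree = i := by
    rw [natDegree_eq_of_degree_eq (degree_eq_degree_of_associated hgcd), natDegree_X_sub_one_pow]
  calc linComp S ≤ c
      ↔ 2 ^ n - c ≤ i := by
        rw [linComp, hmodulus, hnatDegree]
        omega
    _ ↔ (X - 1) ^ (2 ^ n - c) ∣ EuclideanDomain.gcd ((X - 1) ^ 2 ^ n) (genPoly S) := by
        rw [hgcd.dvd_iff_dvd_right,
          pow_dvd_pow_iff prime_X_sub_one.ne_zero prime_X_sub_one.not_isUnit]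
    _ ↔ (X - 1) ^ (2 ^ n - c) ∣ genPoly S :=
        ⟨fun h => h.trans (EuclideanDomain.gcd_dvd_right _ _),
          EuclideanDomain.dvd_gcd (pow_dvd_pow _ (Nat.sub_le _ _))⟩

lemma linComp_add_le {S T : Fin (2 ^ n) → ZMod 2} {c : ℕ} (hS : linComp S ≤ c)
    (hT : linComp T ≤ c) : linComp (S + T) ≤ c := by
  rw [linComp_le_iff] at hS hT ⊢
  rw [genPoly_add]
  exact dvd_add hS hT

lemma linComp_E1_add_E1_le_iff (i j : Fin (2 ^ n)) (c : ℕ) :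
    linComp (E1 i + E1 j) ≤ c ↔ (i : ℕ) ≡ j [MOD 2 ^ Nat.clog 2 (2 ^ n - c)] := by
  rw [linComp_le_iff, genPoly_add, genPoly_E1, genPoly_E1, ← CharTwo.sub_eq_add,
    X_sub_one_pow_dvd_X_pow_sub_X_pow_iff (p := 2)]

lemma odd_wt_iff_linComp_eq (S : Fin (2 ^ n) → ZMod 2) : Odd (wt S) ↔ linComp S = 2 ^ n := by
  have hpos : 0 < 2 ^ n := by positivity
  have heven : Even (wt S) ↔ linComp S ≤ 2 ^ n - 1 := by
    rw [linComp_le_iff, Nat.sub_sub_self hpos, pow_one, X_sub_one_dvd_iff, eval_one_genPoly,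
      ZMod.natCast_eq_zero_iff_even]
  have hle := linComp_le S
  rw [← Nat.not_even_iff_odd, heven]
  omega

lemma linComp_eq_of_linComp_add_E1_lt {S : Fin (2 ^ n) → ZMod 2} {r : Fin (2 ^ n)}
    (h : linComp (S + E1 r) < 2 ^ n) : linComp S = 2 ^ n := by
  have hE1 : linComp (E1 r) = 2 ^ n := (odd_wt_iff_linComp_eq _).mp (by simp [wt_E1])
  by_contra hS
  have hlt : linComp S ≤ 2 ^ n - 1 := Nat.le_sub_one_of_lt (lt_of_le_of_ne (linComp_le S) hS)
  have hsum := linComp_add_le hlt (Nat.le_sub_one_of_lt h)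
  rw [← add_assoc, ZModModule.add_self, zero_add, hE1] at hsum
  omega

lemma linComp_add_E1_le_iff {S : Fin (2 ^ n) → ZMod 2} {r : Fin (2 ^ n)} {c : ℕ}
    (hr : linComp (S + E1 r) ≤ c) (j : Fin (2 ^ n)) :
    linComp (S + E1 j) ≤ c ↔ (r : ℕ) ≡ j [MOD 2 ^ Nat.clog 2 (2 ^ n - c)] := by
  rw [← linComp_E1_add_E1_le_iff]
  constructor
  · intro hj
    have hsum : E1 r + E1 j = (S + E1 r) + (S + E1 j) := by
      rw [add_add_add_comm, ZModModule.add_self, zero_add]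
    rw [hsum]
    exact linComp_add_le hr hj
  · intro hrj
    have hsum : S + E1 j = (S + E1 r) + (E1 r + E1 j) := by
      rw [add_assoc, ← add_assoc (E1 r), ZModModule.add_self, zero_add]
    rw [hsum]
    exact linComp_add_le hr hrj

lemma linComp_add_E1_le_iff_modEq {S : Fin (2 ^ n) → ZMod 2} {c k : ℕ}
    (hlow : 2 ^ n - 2 ^ (k + 1) ≤ c) (hhigh : c < 2 ^ n - 2 ^ k) {r : Fin (2 ^ n)}
    (hr : linComp (S + E1 r) ≤ c) (j : Fin (2 ^ n)) :
    linComp (S + E1 j) ≤ c ↔ (r : ℕ) ≡ j [MOD 2 ^ (k + 1)] := by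
  rw [linComp_add_E1_le_iff hr, clog_two_pow_sub hlow hhigh]

lemma ncard_setOf_linComp_le {c : ℕ} (hc : c ≤ 2 ^ n) :
    {S : Fin (2 ^ n) → ZMod 2 | linComp S ≤ c}.ncard = 2 ^ c := by
  simp only [linComp_le_iff]
  rw [ncard_setOf_dvd_genPoly (monic_X_sub_one.pow _) (by
    rw [natDegree_X_sub_one_pow]
    exact Nat.sub_le _ _),
    natDegree_X_sub_one_pow, Nat.sub_sub_self hc]

lemma ncard_setOf_linComp_eq {c : ℕ} (hc0 : 0 < c) (hc : c ≤ 2 ^ n) :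
    {S : Fin (2 ^ n) → ZMod 2 | linComp S = c}.ncard = 2 ^ (c - 1) := by
  obtain ⟨b, rfl⟩ := Nat.exists_eq_succ_of_ne_zero hc0.ne'
  have hset : {S : Fin (2 ^ n) → ZMod 2 | linComp S = b + 1} =
      {S | linComp S ≤ b + 1} \ {S | linComp S ≤ b} := by
    ext S
    change linComp S = b + 1 ↔ linComp S ≤ b + 1 ∧ ¬ linComp S ≤ b
    omega
  have hsub : {S : Fin (2 ^ n) → ZMod 2 | linComp S ≤ b} ⊆ {S | linComp S ≤ b + 1} :=
    fun S hS => Nat.le_succ_of_le hS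
  rw [hset, Set.ncard_sdiff hsub, ncard_setOf_linComp_le hc,
    ncard_setOf_linComp_le (Nat.le_of_succ_le hc), pow_succ, Nat.mul_two, Nat.add_sub_cancel,
    Nat.succ_sub_one]

end LinearComplexity

section ErrorLinearComplexity

lemma errLCZone_le_iff {N : ℕ} (S : Fin N → ZMod 2) (k Z b : ℕ) :
    errLCZone S k Z ≤ b ↔ ∃ T : Fin N → ZMod 2, wt T ≤ k ∧
      (∀ i : Fin N, Z ≤ (i : ℕ) → T i = 0) ∧ linComp (S + T) ≤ b := by
  constructor
  · intro h
    obtain ⟨T, hwt, hzone, hT⟩ := Nat.sInf_mem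
      (s := {c | ∃ T : Fin N → ZMod 2, wt T ≤ k ∧ (∀ i : Fin N, Z ≤ (i : ℕ) → T i = 0) ∧
        linComp (S + T) = c}) ⟨linComp (S + 0), 0, by simp [wt], fun _ _ => rfl, rfl⟩
    exact ⟨T, hwt, hzone, hT.trans_le h⟩
  · rintro ⟨T, hwt, hzone, hT⟩
    have hle : errLCZone S k Z ≤ linComp (S + T) := Nat.sInf_le ⟨T, hwt, hzone, rfl⟩
    exact hle.trans hT

lemma errLC_eq_errLCZone {N : ℕ} (S : Fin N → ZMod 2) (k : ℕ) : errLC S k = errLCZone S k N := by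
  have hzone (T : Fin N → ZMod 2) : ∀ i : Fin N, N ≤ (i : ℕ) → T i = 0 :=
    fun i hi => absurd i.isLt hi.not_gt
  simp only [errLC, errLCZone, iff_true_intro (hzone _), true_and]

lemma errLCZone_one_le_iff {N : ℕ} {S : Fin N → ZMod 2} {Z b : ℕ} (hb : b < linComp S) :
    errLCZone S 1 Z ≤ b ↔ ∃ j : Fin N, (j : ℕ) < Z ∧ linComp (S + E1 j) ≤ b := by
  rw [errLCZone_le_iff]
  constructor
  · rintro ⟨T, hwt, hzone, hT⟩
    rcases (wt_le_one_iff T).mp hwt with rfl | ⟨j, rfl⟩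
    · rw [add_zero] at hT
      omega
    · exact ⟨j, (E1_eq_zero_of_le_iff j Z).mp hzone, hT⟩
  · rintro ⟨j, hj, hT⟩
    exact ⟨E1 j, (wt_E1 j).le, (E1_eq_zero_of_le_iff j Z).mpr hj, hT⟩

lemma errLC_one_le_iff {N : ℕ} {S : Fin N → ZMod 2} {b : ℕ} (hb : b < linComp S) :
    errLC S 1 ≤ b ↔ ∃ j : Fin N, linComp (S + E1 j) ≤ b := by
  simp only [errLC_eq_errLCZone, errLCZone_one_le_iff hb, Fin.is_lt, true_and]

lemma errLC_one_le_linComp_add_E1 {N : ℕ} (S : Fin N → ZMod 2) (j : Fin N) :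
    errLC S 1 ≤ linComp (S + E1 j) :=
  Nat.sInf_le ⟨E1 j, (wt_E1 j).le, rfl⟩

variable {n : ℕ}

lemma errLCZone_one_le_iff_mod_lt {S : Fin (2 ^ n) → ZMod 2} {r : Fin (2 ^ n)} {b Z : ℕ}
    (hr : linComp (S + E1 r) ≤ b) (hb : b < 2 ^ n) (hZ : Z ≤ 2 ^ Nat.clog 2 (2 ^ n - b)) :
    errLCZone S 1 Z ≤ b ↔ (r : ℕ) % 2 ^ Nat.clog 2 (2 ^ n - b) < Z := by
  have hS : linComp S = 2 ^ n := linComp_eq_of_linComp_add_E1_lt (hr.trans_lt hb)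
  have hclog : Nat.clog 2 (2 ^ n - b) ≤ n := Nat.clog_le_of_le_pow (Nat.sub_le _ _)
  rw [errLCZone_one_le_iff (hb.trans_eq hS.symm),
    ← exists_fin_lt_and_modEq_iff (hZ.trans (Nat.pow_le_pow_right two_pos hclog)) hZ]
  simp only [linComp_add_E1_le_iff hr]

lemma errLCZone_one_eq_iff {S : Fin (2 ^ n) → ZMod 2} {r : Fin (2 ^ n)} {t Z : ℕ}
    (hr : linComp (S + E1 r) < 2 ^ n - 2 ^ t) (hZ : Z ≤ 2 ^ t) :
    errLCZone S 1 Z = 2 ^ n - 2 ^ t ↔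
      (r : ℕ) % 2 ^ t < Z ∧ Z ≤ (r : ℕ) % 2 ^ (t + 1) := by
  have hpos : 0 < 2 ^ t := by positivity
  have hclog : Nat.clog 2 (2 ^ n - (2 ^ n - 2 ^ t)) = t := by
    rw [Nat.sub_sub_self (by omega), Nat.clog_pow 2 t one_lt_two]
  have hclog' : Nat.clog 2 (2 ^ n - (2 ^ n - 2 ^ t - 1)) = t + 1 :=
    clog_two_pow_sub (by omega) (by omega)
  have hle := errLCZone_one_le_iff_mod_lt (Z := Z) hr.le (by omega) (by rwa [hclog])
  have hlt := errLCZone_one_le_iff_mod_lt (Z := Z) (Nat.le_sub_one_of_lt hr) (by omega)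
    (by rw [hclog']; omega)
  rw [hclog] at hle
  rw [hclog'] at hlt
  omega

lemma errLC_one_eq_of_linComp_add_E1_eq {S : Fin (2 ^ n) → ZMod 2} {c k : ℕ}
    (hlow : 2 ^ n - 2 ^ (k + 1) < c) (hhigh : c < 2 ^ n - 2 ^ k) {r : Fin (2 ^ n)}
    (hr : linComp (S + E1 r) = c) : errLC S 1 = c := by
  have hS : linComp S = 2 ^ n := linComp_eq_of_linComp_add_E1_lt (r := r) (by omega)
  refine le_antisymm (hr ▸ errLC_one_le_linComp_add_E1 S r) ?_
  by_contra! hlt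
  obtain ⟨j, hj⟩ := (errLC_one_le_iff (by omega)).mp (Nat.le_sub_one_of_lt hlt)
  have hrj : (r : ℕ) ≡ j [MOD 2 ^ (k + 1)] :=
    (linComp_add_E1_le_iff_modEq hlow.le hhigh hr.le j).mp (by omega)
  have hr' : linComp (S + E1 r) ≤ c - 1 :=
    (linComp_add_E1_le_iff_modEq (by omega) (by omega) hj r).mpr hrj.symm
  omega

lemma exists_linComp_add_E1_eq_of_errLC_one_eq {S : Fin (2 ^ n) → ZMod 2} {c k : ℕ}
    (hlow : 2 ^ n - 2 ^ (k + 1) ≤ c) (hhigh : c < 2 ^ n - 2 ^ k) (hS : linComp S = 2 ^ n)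
    (hc : errLC S 1 = c) : ∃ r : Fin (2 ^ n), (r : ℕ) < 2 ^ (k + 1) ∧ linComp (S + E1 r) = c := by
  obtain ⟨j, hj⟩ := (errLC_one_le_iff (by omega)).mp hc.le
  have hmod : (j : ℕ) % 2 ^ (k + 1) < 2 ^ (k + 1) := Nat.mod_lt _ (by positivity)
  let r : Fin (2 ^ n) := ⟨j % 2 ^ (k + 1), (Nat.mod_le _ _).trans_lt j.isLt⟩
  have hle : linComp (S + E1 r) ≤ c :=
    (linComp_add_E1_le_iff_modEq hlow hhigh hj r).mpr (Nat.mod_modEq _ _).symm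
  exact ⟨r, hmod, hle.antisymm (hc ▸ errLC_one_le_linComp_add_E1 S r)⟩

lemma odd_wt_and_errLC_one_eq_iff {S : Fin (2 ^ n) → ZMod 2} {c k : ℕ}
    (hlow : 2 ^ n - 2 ^ (k + 1) < c) (hhigh : c < 2 ^ n - 2 ^ k) :
    Odd (wt S) ∧ errLC S 1 = c ↔
      ∃ r : Fin (2 ^ n), (r : ℕ) < 2 ^ (k + 1) ∧ linComp (S + E1 r) = c := by
  rw [odd_wt_iff_linComp_eq]
  constructor
  · rintro ⟨hS, hc⟩
    exact exists_linComp_add_E1_eq_of_errLC_one_eq hlow.le hhigh hS hc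
  · rintro ⟨r, -, hr⟩
    exact ⟨linComp_eq_of_linComp_add_E1_lt (r := r) (by omega),
      errLC_one_eq_of_linComp_add_E1_eq hlow hhigh hr⟩

lemma odd_wt_and_errLC_one_eq_and_errLCZone_one_eq_iff {S : Fin (2 ^ n) → ZMod 2} {c k t Z : ℕ}
    (hlow : 2 ^ n - 2 ^ (k + 1) < c) (hhigh : c < 2 ^ n - 2 ^ k) (htk : t ≤ k) (hZ : Z ≤ 2 ^ t) :
    Odd (wt S) ∧ errLC S 1 = c ∧ errLCZone S 1 Z = 2 ^ n - 2 ^ t ↔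
      ∃ r : Fin (2 ^ n), ((r : ℕ) < 2 ^ (k + 1) ∧
        (r : ℕ) % 2 ^ t < Z ∧ Z ≤ (r : ℕ) % 2 ^ (t + 1)) ∧ linComp (S + E1 r) = c := by
  have hpow : 2 ^ t ≤ 2 ^ k := Nat.pow_le_pow_right two_pos htk
  have hzone {r : Fin (2 ^ n)} (hr : linComp (S + E1 r) = c) :
      errLCZone S 1 Z = 2 ^ n - 2 ^ t ↔ (r : ℕ) % 2 ^ t < Z ∧ Z ≤ (r : ℕ) % 2 ^ (t + 1) :=
    errLCZone_one_eq_iff (by omega) hZ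
  rw [← and_assoc, odd_wt_and_errLC_one_eq_iff hlow hhigh]
  constructor
  · rintro ⟨⟨r, hrk, hr⟩, hSZ⟩
    exact ⟨r, ⟨hrk, (hzone hr).mp hSZ⟩, hr⟩
  · rintro ⟨r, ⟨hrk, hrZ⟩, hr⟩
    exact ⟨⟨r, hrk, hr⟩, (hzone hr).mpr hrZ⟩

end ErrorLinearComplexity

theorem stmt11_general (n Z s c t : ℕ) (h1 : 2 ^ n - 2 ^ s < c) (h2 : c < 2 ^ n - 2 ^ (s - 1))
    (hts : t < s) (hZt : Z ≤ 2 ^ t) :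
    {S : Fin (2 ^ n) → ZMod 2 | Odd (wt S) ∧ errLC S 1 = c ∧
      errLCZone S 1 Z = 2 ^ n - 2 ^ t}.ncard = Z * 2 ^ (c + s - t - 2) := by
  obtain ⟨k, rfl⟩ : ∃ k, s = k + 1 := ⟨s - 1, by omega⟩
  rw [Nat.add_sub_cancel] at h2
  have hkn : k < n := (Nat.pow_lt_pow_iff_right one_lt_two).mp (by omega : 2 ^ k < 2 ^ n)
  let R : Set (Fin (2 ^ n)) :=
    {r | (r : ℕ) < 2 ^ (k + 1) ∧ (r : ℕ) % 2 ^ t < Z ∧ Z ≤ (r : ℕ) % 2 ^ (t + 1)}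
  have hset : {S : Fin (2 ^ n) → ZMod 2 | Odd (wt S) ∧ errLC S 1 = c ∧
      errLCZone S 1 Z = 2 ^ n - 2 ^ t} = {S | ∃ r ∈ R, S + E1 r ∈ {U | linComp U = c}} :=
    Set.ext fun S => odd_wt_and_errLC_one_eq_and_errLCZone_one_eq_iff h1 h2 (by omega) hZt
  have hunique (S : Fin (2 ^ n) → ZMod 2) (i) (hi : i ∈ R) (j) (hj : j ∈ R)
      (hSi : linComp (S + E1 i) = c) (hSj : linComp (S + E1 j) = c) : i = j :=
    Fin.ext <| ((linComp_add_E1_le_iff_modEq h1.le h2 hSi.le j).mp hSj.le).eq_of_lt_of_lt hi.1 hj.1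
  rw [hset, ncard_setOf_exists_add_mem hunique, ncard_fin_lt_two_pow_and_mod hkn hts hZt,
    ncard_setOf_linComp_eq (by omega) (by omega), mul_comm (2 ^ _) Z, mul_assoc, ← pow_add]
  congr 2
  omega

/-- Case `s > a`, `a+1 ≤ t ≤ s-1`: exactly `Z · 2^{c+s-t-2}` odd-weight sequences
with `L_1(S) = c` satisfy `L_{1;Z}(S) = 2^n - 2^t`. -/
theorem stmt11 (n Z s c t : ℕ) (hn : 4 ≤ n) (hZ0 : 0 < Z) (hZ : Z ≤ 2^n)
    (h1 : 2^n - 2^s < c) (h2 : c < 2^n - 2^(s-1)) (hsa : Nat.log 2 Z < s)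
    (ht1 : Nat.log 2 Z + 1 ≤ t) (ht2 : t ≤ s - 1) :
    {S : Fin (2^n) → ZMod 2 | Odd (wt S) ∧ errLC S 1 = c ∧
      errLCZone S 1 Z = 2^n - 2^t}.ncard = Z * 2^(c + s - t - 2) :=
  stmt11_general n Z s c t h1 h2 (by omega) (Nat.lt_pow_of_log_lt one_lt_two ht1).le
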